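/- Let V be a finite set, and for each v ∈ V let E_v be a finite set of edges, with the E_v pairwise disjoint; let ℓ : ⋃_v E_v → ℝ_{≥0} and w : ⋃_v E_v → ℝ_{>0}; let Y be a nonempty finite set, and for each y ∈ Y let p_y : ⋃_v E_v → ℝ_{≥0} and let P_{y,v} ≥ 0 (the flow value of p_y through E_v). Let W_y ⊆ V, and suppose: (1) there is ω ≥ 1 with |W_y| = ω for all y; (2) for v ∉ W_y, P_{y,v} = 0 and p_y(e) = 0 for all e ∈ E_v; (3) for v ∈ W_y, P_{y,v} = P_y/ω where P_y = Σ_{v∈V} P_{y,v} > 0. Define C₀(E_v) = Σ_{e∈E_v} ℓ(e)w(e) and C₁(E_v) = max{ Σ_{e∈E_v} ℓ(e)p_y(e)²/(w(e)P_{y,v}²) : y ∈ Y with P_{y,v} > 0 } (and 0 if no such y). Then (Σ_{v∈V} C₀(E_v)) · (max_{y∈Y} Σ_{v∈V} Σ_{e∈E_v} ℓ(e)p_y(e)²/(w(e)P_y²)) ≤ (max_{v∈V} C₀(E_v)) · (max_{v∈V} C₁(E_v)) · |V|/ω. -/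

import Mathlib

/-!
Positive complexity is homogeneous of degree `-2` in the flow value. Since each of the `ω` vertices
of `Ws y` carries the fraction `1 / ω` of the total flow value, its contribution measured against
the total value is at most `B / ω ^ 2`, where `B` is the maximal positive complexity. The whole
stage thus has positive complexity at most `B / ω`, and negative complexity at most `|V|` times the
maximal one.
-/

/-- The negative complexity `C₀(E)` of an edge set `E` with lengths `ℓ` and weights `w`. -/
def negativeComplexity {β : Type*} (ℓ w : β → ℝ) (E : Finset β) : ℝ :=
  ∑ e ∈ E, ℓ e * w e

/-- The positive complexity of an edge set `E` for a single flow `q`, normalized by the flow value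
`c`. The value is a separate argument because one flow is measured against both its value through
`E` and its total value; `C₁(E)` is the maximum over all flows of positive value through `E`. -/
noncomputable def positiveComplexity {β : Type*} (ℓ w q : β → ℝ) (c : ℝ) (E : Finset β) : ℝ :=
  ∑ e ∈ E, ℓ e * q e ^ 2 / (w e * c ^ 2)

section Complexity

variable {β : Type*} {ℓ w q : β → ℝ} {E : Finset β}

lemma negativeComplexity_nonneg (hℓ : ∀ e ∈ E, 0 ≤ ℓ e) (hw : ∀ e ∈ E, 0 ≤ w e) :
    0 ≤ negativeComplexity ℓ w E :=
  Finset.sum_nonneg fun e he => mul_nonneg (hℓ e he) (hw e he)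

lemma positiveComplexity_nonneg (hℓ : ∀ e ∈ E, 0 ≤ ℓ e) (hw : ∀ e ∈ E, 0 ≤ w e) (c : ℝ) :
    0 ≤ positiveComplexity ℓ w q c E :=
  Finset.sum_nonneg fun e he =>
    div_nonneg (mul_nonneg (hℓ e he) (sq_nonneg _)) (mul_nonneg (hw e he) (sq_nonneg _))

lemma positiveComplexity_eq_zero (hq : ∀ e ∈ E, q e = 0) (c : ℝ) :
    positiveComplexity ℓ w q c E = 0 :=
  Finset.sum_eq_zero fun e he => by simp [hq e he]

lemma positiveComplexity_div (c r : ℝ) :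
    positiveComplexity ℓ w q (c / r) E = positiveComplexity ℓ w q c E * r ^ 2 := by
  simp only [positiveComplexity, Finset.sum_mul]
  refine Finset.sum_congr rfl fun e _ => ?_
  rw [div_pow, ← mul_div_assoc, div_div_eq_mul_div, mul_div_right_comm]

lemma sum_positiveComplexity_le_div_card {V : Type*} [Fintype V] {Ev : V → Finset β}
    {W : Finset V} (hW : W.Nonempty) (hq : ∀ v ∉ W, ∀ e ∈ Ev v, q e = 0) {c B : ℝ}
    (hB : ∀ v ∈ W, positiveComplexity ℓ w q (c / W.card) (Ev v) ≤ B) :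
    ∑ v, positiveComplexity ℓ w q c (Ev v) ≤ B / W.card := by
  have hcard : (0 : ℝ) < W.card := by exact_mod_cast hW.card_pos
  calc ∑ v, positiveComplexity ℓ w q c (Ev v)
      = ∑ v ∈ W, positiveComplexity ℓ w q c (Ev v) :=
        (Finset.sum_subset W.subset_univ fun v _ hv => positiveComplexity_eq_zero (hq v hv) c).symm
    _ ≤ W.card • (B / W.card ^ 2) :=
        Finset.sum_le_card_nsmul W _ _ fun v hv =>
          (le_div_iff₀ (pow_pos hcard 2)).2 (positiveComplexity_div (E := Ev v) c _ ▸ hB v hv)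
    _ = B / W.card := by
        rw [nsmul_eq_mul]
        field_simp

end Complexity

lemma sum_le_card_mul_iSup {ι : Type*} [Fintype ι] (f : ι → ℝ) :
    ∑ i, f i ≤ Fintype.card ι * ⨆ i, f i := by
  simpa only [nsmul_eq_mul, Finset.card_univ] using
    Finset.sum_le_card_nsmul Finset.univ f _ fun i _ => Finite.le_ciSup f i

lemma le_iSup_iSup_of_finite {α ι : Type*} {κ : ι → Type*} [ConditionallyCompleteLattice α]
    [Finite ι] [∀ i, Finite (κ i)] (f : ∀ i, κ i → α) (i : ι) (j : κ i) : f i j ≤ ⨆ i, ⨆ j, f i j :=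
  (Finite.le_ciSup (f i) j).trans (Finite.le_ciSup (fun i => ⨆ j, f i j) i)

theorem stage_vertex_ratio_general {β V Y : Type*} [Fintype V] [Finite Y] [Nonempty Y]
    (Ev : V → Finset β) (ℓ : β → ℝ) (hℓ : ∀ v, ∀ e ∈ Ev v, 0 ≤ ℓ e)
    (w : β → ℝ) (hw : ∀ v, ∀ e ∈ Ev v, 0 < w e)
    (p : Y → β → ℝ) (P : Y → V → ℝ) (Ws : Y → Finset V)
    (ω : ℕ) (hω : 1 ≤ ω) (hWcard : ∀ y, (Ws y).card = ω)
    (hzero : ∀ y, ∀ v ∉ Ws y, ∀ e ∈ Ev v, p y e = 0)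
    (hPpos : ∀ y, 0 < ∑ v, P y v)
    (hunif : ∀ y, ∀ v ∈ Ws y, P y v = (∑ v', P y v') / ω) :
    (∑ v, negativeComplexity ℓ w (Ev v)) *
        (⨆ y, ∑ v, positiveComplexity ℓ w (p y) (∑ v', P y v') (Ev v)) ≤
      (⨆ v, negativeComplexity ℓ w (Ev v)) *
        (⨆ v, ⨆ y : {y // 0 < P y v}, positiveComplexity ℓ w (p y) (P y v) (Ev v)) *
        (Fintype.card V / ω) := by
  set A := ⨆ v, negativeComplexity ℓ w (Ev v)
  set B := ⨆ v, ⨆ y : {y // 0 < P y v}, positiveComplexity ℓ w (p y) (P y v) (Ev v)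
  have hw' : ∀ v, ∀ e ∈ Ev v, 0 ≤ w e := fun v e he => (hw v e he).le
  have hA : 0 ≤ A := Real.iSup_nonneg fun v => negativeComplexity_nonneg (hℓ v) (hw' v)
  have active_le (y : Y) (v : V) (hv : v ∈ Ws y) :
      positiveComplexity ℓ w (p y) (P y v) (Ev v) ≤ B := by
    have hPv : 0 < P y v := hunif y v hv ▸ div_pos (hPpos y) (by exact_mod_cast hω)
    exact le_iSup_iSup_of_finite
      (fun v (y : {y // 0 < P y v}) => positiveComplexity ℓ w (p y) (P y v) (Ev v)) v ⟨y, hPv⟩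
  have stage_le (y : Y) :
      ∑ v, positiveComplexity ℓ w (p y) (∑ v', P y v') (Ev v) ≤ B / ω := by
    rw [← hWcard y]
    refine sum_positiveComplexity_le_div_card (Finset.card_pos.1 (hWcard y ▸ hω)) (hzero y) ?_
    intro v hv
    rw [hWcard y, ← hunif y v hv]
    exact active_le y v hv
  calc _ ≤ (Fintype.card V * A) * (B / ω) :=
        mul_le_mul (sum_le_card_mul_iSup _) (ciSup_le stage_le)
          (Real.iSup_nonneg fun y => Finset.sum_nonneg fun v _ =>
            positiveComplexity_nonneg (hℓ v) (hw' v) _)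
          (mul_nonneg (Nat.cast_nonneg _) hA)
    _ = A * B * (Fintype.card V / ω) := by ring

/-- **Lemma 9 of the paper, analytic form.** `Ev v` are pairwise disjoint edge sets attached
to the vertices `v ∈ V` of the beginning of a stage, `Ws y` is the set of vertices receiving
positive flow under `p y` (of size `ω` independent of `y`), `P y v` is the flow value of
`p y` through `Ev v`, and the incoming flow splits equally among the vertices of `Ws y`.
Then the squared complexity of the stage is bounded by the product of the maximal negative
complexity, the maximal positive complexity, and the vertex ratio `|V|/ω`. -/
theorem stage_vertex_ratio {β : Type} [DecidableEq β] {V : Type} [Fintype V]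
    (Ev : V → Finset β)
    (hdisj : ∀ u v : V, u ≠ v → Disjoint (Ev u) (Ev v))
    (ℓ : β → ℝ) (hℓ : ∀ v : V, ∀ e ∈ Ev v, 0 ≤ ℓ e)
    (w : β → ℝ) (hw : ∀ v : V, ∀ e ∈ Ev v, 0 < w e)
    {Y : Type} [Fintype Y] [Nonempty Y]
    (p : Y → β → ℝ) (hp : ∀ (y : Y) (v : V), ∀ e ∈ Ev v, 0 ≤ p y e)
    (P : Y → V → ℝ) (hP : ∀ (y : Y) (v : V), 0 ≤ P y v)
    (Ws : Y → Finset V)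
    (ω : ℕ) (hω : 1 ≤ ω)
    (hWcard : ∀ y : Y, (Ws y).card = ω)
    (hzero : ∀ (y : Y) (v : V), v ∉ Ws y → P y v = 0 ∧ ∀ e ∈ Ev v, p y e = 0)
    (hPpos : ∀ y : Y, 0 < ∑ v : V, P y v)
    (hunif : ∀ y : Y, ∀ v ∈ Ws y, P y v = (∑ v' : V, P y v') / (ω : ℝ)) :
    (∑ v : V, ∑ e ∈ Ev v, ℓ e * w e) *
        (⨆ y : Y, ∑ v : V, ∑ e ∈ Ev v,
          ℓ e * (p y e) ^ 2 / (w e * (∑ v' : V, P y v') ^ 2)) ≤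
      (⨆ v : V, ∑ e ∈ Ev v, ℓ e * w e) *
        (⨆ v : V, ⨆ y : {y : Y // 0 < P y v},
          ∑ e ∈ Ev v, ℓ e * (p y.1 e) ^ 2 / (w e * (P y.1 v) ^ 2)) *
        ((Fintype.card V : ℝ) / (ω : ℝ)) :=
  stage_vertex_ratio_general Ev ℓ hℓ w hw p P Ws ω hω hWcard
    (fun y v hv => (hzero y v hv).2) hPpos hunif
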